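/- arXiv:2406.09962 — 2 statements merged into one kernel-verified Lean document; each statement's English description precedes it below -/
import Mathlib

section
/- Let N ≥ 1, let G be a subgroup of the permutation group of Fin N, and for α ∈ G let U_α be the permutation matrix on (Fin N → Fin 2) of the bijection x ↦ x ∘ α. Then for every A ∈ SU(2^N) with U_α A U_α⁻¹ = A for all α ∈ G, there exists a traceless skew-Hermitian matrix a with U_α a U_α⁻¹ = a for all α ∈ G such that A = exp(a). -/
open Matrix

/-- The permutation matrix on the index set `I → Fin 2` associated to a permutation `α` of
`I`, corresponding to the bijection `x ↦ x ∘ α`: its `(x, y)` entry is `1` if `y = x ∘ α`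
and `0` otherwise. -/
def qubitPermMatrix {I : Type*} [DecidableEq I] [Fintype I] (α : Equiv.Perm I) :
    Matrix (I → Fin 2) (I → Fin 2) ℂ :=
  Matrix.of fun x y => if y = x ∘ α then 1 else 0

/-!
Write `A = exp a` with `a` the principal logarithm of `A`, a function of the normal matrix `A` and
hence skew-adjoint and commuting with everything `A` commutes with. Since `exp (tr a) = det A = 1`,
subtracting `tr a • p`, for a rank-one orthogonal projection `p` commuting with `a`, makes `a`
traceless without changing `exp a`. It remains to find such a `p` that also commutes with the `U_α`:
the constant vector is fixed by every `U_α`, so the joint fixed space of the `U_α` is nonzero and,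
being stable under `A`, contains an eigenvector of `A`. The `U_α` and `A` are all normal, so they
commute with the orthogonal projection onto the line spanned by that eigenvector.
-/

open NormedSpace (exp exp_zero exp_series_hasSum_exp')

section Determinant

variable {n 𝕜 : Type*} [Fintype n] [DecidableEq n]

theorem trace_adjugate_mul {R : Type*} [CommRing R] (A B : Matrix n n R) :
    (A.adjugate * B).trace = ∑ i, (A.updateCol i (B.col i)).det := by
  simp_rw [← cramer_apply, cramer_eq_adjugate_mulVec]
  rfl

theorem hasDerivAt_det [NontriviallyNormedField 𝕜] {M : 𝕜 → Matrix n n 𝕜} {M' : Matrix n n 𝕜}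
    {t : 𝕜} (hM : ∀ i j, HasDerivAt (fun s ↦ M s i j) (M' i j) t) :
    HasDerivAt (fun s ↦ (M s).det) ((M t).adjugate * M').trace t := by
  have hterm (σ : Equiv.Perm n) :=
    (HasDerivAt.fun_finsetProd (u := Finset.univ) fun i _ ↦ hM (σ i) i).const_mul
      ((Equiv.Perm.sign σ : ℤ) : 𝕜)
  simp only [det_apply']
  convert! HasDerivAt.fun_sum (u := Finset.univ) fun σ _ ↦ hterm σ using 1
  simp only [trace_adjugate_mul, det_apply', Finset.mul_sum]
  rw [Finset.sum_comm]
  refine Finset.sum_congr rfl fun σ _ ↦ Finset.sum_congr rfl fun i _ ↦ ?_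
  rw [← Finset.prod_erase_mul _ _ (Finset.mem_univ i), updateCol_self, smul_eq_mul]
  congr 2
  exact Finset.prod_congr rfl fun j hj ↦ updateCol_ne (Finset.ne_of_mem_erase hj)

variable [RCLike 𝕜]

open scoped Matrix.Norms.Operator in
theorem hasDerivAt_det_exp_smul (A : Matrix n n 𝕜) (t : 𝕜) :
    HasDerivAt (fun s : 𝕜 ↦ (exp (s • A)).det) ((exp (t • A)).det * A.trace) t := by
  have hentry (i j : n) : HasDerivAt (fun s : 𝕜 ↦ exp (s • A) i j) ((exp (t • A) * A) i j) t :=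
    (LinearMap.toContinuousLinearMap (entryLinearMap 𝕜 𝕜 i j)).hasFDerivAt.comp_hasDerivAt t
      (hasDerivAt_exp_smul_const A t)
  have h := hasDerivAt_det hentry
  rwa [← Matrix.mul_assoc, adjugate_mul, Matrix.smul_mul, Matrix.one_mul, trace_smul,
    smul_eq_mul] at h

theorem det_exp (A : Matrix n n 𝕜) : (exp A).det = exp A.trace := by
  have hderiv (t : 𝕜) :
      HasDerivAt (fun s : 𝕜 ↦ (exp (s • A)).det * exp (s • -A.trace)) 0 t := by
    convert! (hasDerivAt_det_exp_smul A t).mul (hasDerivAt_exp_smul_const (-A.trace) t) using 1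
    ring
  have hconst := is_const_of_deriv_eq_zero (fun t ↦ (hderiv t).differentiableAt)
    (fun t ↦ (hderiv t).deriv) 1 0
  let : NormedAlgebra ℚ 𝕜 := NormedAlgebra.restrictScalars ℚ 𝕜 𝕜
  simp only [one_smul, zero_smul, exp_zero, det_one, mul_one, NormedSpace.exp_neg] at hconst
  exact eq_of_div_eq_one ((div_eq_mul_inv _ _).trans hconst)

end Determinant

section TraceCorrection

variable {n 𝕜 : Type*} [Fintype n] [RCLike 𝕜]

theorem exp_smul_of_isIdempotentElem {R : Type*} [NormedRing R] [NormedAlgebra 𝕜 R]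
    [CompleteSpace R] {p : R} (hp : IsIdempotentElem p) (c : 𝕜) :
    exp (c • p) = 1 + (exp c - 1) • p := by
  have h := ((exp_series_hasSum_exp' (𝕂 := 𝕜) c).smul_const p).add (hasSum_ite_eq 0 (1 - p))
  refine (exp_series_hasSum_exp' (𝕂 := 𝕜) (c • p)).unique ?_
  convert h using 1
  · ext (_ | k)
    · simp
    · simp [smul_pow, hp.pow_succ_eq, smul_smul]
  · rw [sub_smul, one_smul]
    abel

open scoped Matrix.Norms.Operator in
theorem exp_sub_trace_smul [DecidableEq n] {a p : Matrix n n 𝕜} (hp : IsIdempotentElem p)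
    (hap : Commute a p) (hdet : (exp a).det = 1) : exp (a - a.trace • p) = exp a := by
  let : NormedAlgebra ℚ 𝕜 := NormedAlgebra.restrictScalars ℚ 𝕜 𝕜
  have hexp : exp (-a.trace) = 1 := by
    rw [NormedSpace.exp_neg, ← det_exp, hdet, inv_one]
  have hcorr : exp (-a.trace • p) = 1 :=
    (exp_smul_of_isIdempotentElem hp _).trans
      (by rw [hexp, sub_self, zero_smul, add_zero])
  rw [sub_eq_add_neg, ← neg_smul, Matrix.exp_add_of_commute _ _ (hap.smul_right _), hcorr,
    mul_one]

theorem sub_trace_smul_mem_skewAdjoint {a p : Matrix n n 𝕜}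
    (ha : a ∈ skewAdjoint (Matrix n n 𝕜)) (hp : IsSelfAdjoint p) :
    a - a.trace • p ∈ skewAdjoint (Matrix n n 𝕜) := by
  rw [skewAdjoint.mem_iff] at ha ⊢
  have htrace : star a.trace = -a.trace := by
    rw [← trace_conjTranspose, ← star_eq_conjTranspose, ha, trace_neg]
  rw [star_sub, star_smul, ha, hp.star_eq, htrace, neg_smul]
  abel

end TraceCorrection

section Logarithm

variable {R : Type*} [CStarAlgebra R] {u : R}

theorem exp_cfc_log [IsStarNormal u] (hu : IsUnit u)
    (hlog : ContinuousOn Complex.log (spectrum ℂ u)) : exp (cfc Complex.log u) = u := by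
  rw [← CFC.complex_exp_eq_normedSpace_exp (cfc_predicate _ u), ← cfc_comp' ..]
  nth_rewrite 2 [← cfc_id' ℂ u]
  exact cfc_congr fun z hz ↦ Complex.exp_log fun h ↦ spectrum.zero_notMem ℂ hu (h ▸ hz)

theorem cfc_log_mem_skewAdjoint (hu : u ∈ unitary R) :
    cfc Complex.log u ∈ skewAdjoint R := by
  rw [skewAdjoint.mem_iff, ← cfc_star, ← cfc_neg]
  refine cfc_congr fun z hz ↦ ?_
  have hre : (Complex.log z).re = 0 := by
    rw [Complex.log_re, spectrum.norm_eq_one_of_unitary hu hz, Real.log_one]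
  apply Complex.ext <;> simp [hre]

end Logarithm

section Eigenvector

theorem exists_eigenvector_of_commute_of_common_eigenvector {K V ι : Type*} [Field K]
    [IsAlgClosed K] [AddCommGroup V] [Module K V] [FiniteDimensional K V] {f : Module.End K V}
    {g : ι → Module.End K V} (hcomm : ∀ i, Commute f (g i)) {μ : ι → K} {v : V} (hv : v ≠ 0)
    (hgv : ∀ i, g i v = μ i • v) :
    ∃ w ≠ 0, (∃ c : K, f w = c • w) ∧ ∀ i, g i w = μ i • w := by
  let W : Submodule K V := ⨅ i, (g i).eigenspace (μ i)
  have mem_W {x : V} : x ∈ W ↔ ∀ i, g i x = μ i • x := by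
    simp [W, Submodule.mem_iInf]
  have hfW : ∀ x ∈ W, f x ∈ W := fun x hx ↦ mem_W.2 fun i ↦ by
    rw [← Module.End.mul_apply, ← (hcomm i).eq, Module.End.mul_apply, mem_W.1 hx i, map_smul]
  have : Nontrivial W := ⟨⟨v, mem_W.2 hgv⟩, 0, fun h ↦ hv (congrArg Subtype.val h)⟩
  obtain ⟨c, hc⟩ := Module.End.exists_eigenvalue (f.restrict hfW)
  obtain ⟨w, hw⟩ := hc.exists_hasEigenvector
  exact ⟨w, fun h ↦ hw.2 (Subtype.ext h), ⟨c, congrArg Subtype.val hw.apply_eq_smul⟩,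
    mem_W.1 w.2⟩

variable {n 𝕜 : Type*} [Fintype n] [RCLike 𝕜]

open scoped ComplexOrder in
theorem conjTranspose_mulVec_eq_star_smul {A : Matrix n n 𝕜} (hA : IsStarNormal A) {c : 𝕜}
    {v : n → 𝕜} (h : A *ᵥ v = c • v) : Aᴴ *ᵥ v = star c • v := by
  classical
  let B : Matrix n n 𝕜 := A - c • 1
  have hBstar : Bᴴ = Aᴴ - star c • 1 := by simp [B]
  have hB : Commute Bᴴ B := hBstar ▸
    (hA.star_comm_self.sub_right ((Commute.one_right _).smul_right c)).sub_left
      ((Commute.one_left _).smul_left _)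
  have hBv : B *ᵥ v = 0 := by simp [B, sub_mulVec, smul_mulVec, h]
  have hBstarv : Bᴴ *ᵥ v = 0 := by
    rwa [← self_mul_conjTranspose_mulVec_eq_zero, ← hB.eq, conjTranspose_mul_self_mulVec_eq_zero]
  simpa [hBstar, sub_mulVec, smul_mulVec, sub_eq_zero] using hBstarv

/-- The matrix of the orthogonal projection onto the line spanned by `v`, used to adjust the trace
of a logarithm. The vector is not required to have norm one; for `v = 0` the matrix is `0`. -/
noncomputable def lineProjection (v : n → 𝕜) : Matrix n n 𝕜 :=
  (star v ⬝ᵥ v)⁻¹ • vecMulVec v (star v)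

open scoped ComplexOrder in
theorem trace_lineProjection {v : n → 𝕜} (hv : v ≠ 0) : (lineProjection v).trace = 1 := by
  have hvv : star v ⬝ᵥ v ≠ 0 := by rwa [Ne, dotProduct_star_self_eq_zero]
  rw [lineProjection, trace_smul, trace_vecMulVec, dotProduct_comm v, smul_eq_mul,
    inv_mul_cancel₀ hvv]

theorem isStarProjection_lineProjection (v : n → 𝕜) : IsStarProjection (lineProjection v) where
  isIdempotentElem := by
    rw [IsIdempotentElem, lineProjection, Matrix.smul_mul, Matrix.mul_smul,
      vecMulVec_mul_vecMulVec, vecMulVec_smul, smul_smul, smul_smul]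
    nth_rewrite 3 [← inv_inv (star v ⬝ᵥ v)]
    rw [mul_self_mul_inv]
  isSelfAdjoint := by
    rw [IsSelfAdjoint, star_eq_conjTranspose, lineProjection, conjTranspose_smul, star_inv₀,
      ← star_dotProduct_star, star_star, conjTranspose_vecMulVec, star_star]

theorem commute_lineProjection {A : Matrix n n 𝕜} (hA : IsStarNormal A) {c : 𝕜} {v : n → 𝕜}
    (h : A *ᵥ v = c • v) : Commute A (lineProjection v) := by
  have hleft : star v ᵥ* A = c • star v := by
    simpa [star_mulVec] using congrArg star (conjTranspose_mulVec_eq_star_smul hA h)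
  rw [Commute, SemiconjBy, lineProjection, Matrix.mul_smul, Matrix.smul_mul, mul_vecMulVec,
    vecMulVec_mul, h, hleft, smul_vecMulVec, vecMulVec_smul]

end Eigenvector

section CommonEigenvector

variable {n ι : Type*} [Fintype n]

theorem exists_lineProjection_commute {U : ι → Matrix n n ℂ} (hU : ∀ i, IsStarNormal (U i))
    {A : Matrix n n ℂ} (hA : IsStarNormal A) (hcomm : ∀ i, Commute A (U i)) {μ : ι → ℂ}
    {v : n → ℂ} (hv : v ≠ 0) (hUv : ∀ i, U i *ᵥ v = μ i • v) :
    ∃ w ≠ 0, Commute A (lineProjection w) ∧ ∀ i, Commute (U i) (lineProjection w) := by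
  classical
  obtain ⟨w, hw, ⟨c, hAw⟩, hUw⟩ := exists_eigenvector_of_commute_of_common_eigenvector
    (f := toLinAlgEquiv' A) (g := fun i ↦ toLinAlgEquiv' (U i))
    (fun i ↦ (hcomm i).map toLinAlgEquiv') hv hUv
  exact ⟨w, hw, commute_lineProjection hA hAw, fun i ↦ commute_lineProjection (hU i) (hUw i)⟩

open scoped Matrix.Norms.L2Operator in
theorem exists_mem_skewAdjoint_commute_exp_eq [DecidableEq n] {U : ι → Matrix n n ℂ}
    (hU : ∀ i, IsStarNormal (U i)) {μ : ι → ℂ} {v : n → ℂ} (hv : v ≠ 0)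
    (hUv : ∀ i, U i *ᵥ v = μ i • v) {A : Matrix n n ℂ} (hA : A ∈ specialUnitaryGroup n ℂ)
    (hcomm : ∀ i, Commute A (U i)) :
    ∃ a ∈ skewAdjoint (Matrix n n ℂ), a.trace = 0 ∧ (∀ i, Commute a (U i)) ∧ exp a = A := by
  obtain ⟨hunitary, hdet⟩ := mem_specialUnitaryGroup_iff.1 hA
  have hnormal : IsStarNormal A := isStarNormal_of_mem_unitary hunitary
  have hlog {B : Matrix n n ℂ} (h : Commute A B) : Commute (cfc Complex.log A) B :=
    h.cfc (hnormal.commute_star_left h) _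
  have hexp : exp (cfc Complex.log A) = A :=
    exp_cfc_log (Unitary.toUnits ⟨A, hunitary⟩).isUnit ((finite_spectrum A).continuousOn _)
  obtain ⟨w, hw, hAw, hUw⟩ := exists_lineProjection_commute hU hnormal hcomm hv hUv
  have hproj := isStarProjection_lineProjection w
  refine ⟨cfc Complex.log A - (cfc Complex.log A).trace • lineProjection w,
    sub_trace_smul_mem_skewAdjoint (cfc_log_mem_skewAdjoint hunitary) hproj.isSelfAdjoint, ?_,
    fun i ↦ (hlog (hcomm i)).sub_left ((hUw i).symm.smul_left _), ?_⟩
  · rw [trace_sub, trace_smul, trace_lineProjection hw, smul_eq_mul, mul_one, sub_self]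
  · rw [exp_sub_trace_smul hproj.isIdempotentElem (hlog hAw) (by rw [hexp, hdet]), hexp]

end CommonEigenvector

section PermutationMatrix

theorem conj_eq_self_iff_commute {n R : Type*} [Fintype n] [DecidableEq n] [CommRing R]
    {U A : Matrix n n R} (hU : IsUnit U) : U * A * U⁻¹ = A ↔ Commute A U := by
  obtain ⟨u, rfl⟩ := hU
  rw [← coe_units_inv, ← Units.commute_iff_mul_inv_cancel, Commute.symm_iff]

theorem permMatrix_mem_unitaryGroup {n R : Type*} [Fintype n] [DecidableEq n] [CommRing R]
    [StarRing R] (σ : Equiv.Perm n) : σ.permMatrix R ∈ unitaryGroup n R := by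
  rw [mem_unitaryGroup_iff, star_eq_conjTranspose, conjTranspose_permMatrix, ← permMatrix_mul,
    inv_mul_cancel, permMatrix_one]

variable {I : Type*} [DecidableEq I] [Fintype I]

theorem qubitPermMatrix_eq_permMatrix (α : Equiv.Perm I) :
    qubitPermMatrix α =
      Equiv.Perm.permMatrix ℂ (Equiv.arrowCongr α.symm (Equiv.refl (Fin 2))) := by
  ext x y
  rw [Equiv.Perm.permMatrix, PEquiv.toMatrix_toPEquiv_apply, Pi.single_apply]
  rfl

theorem qubitPermMatrix_mem_unitaryGroup (α : Equiv.Perm I) :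
    qubitPermMatrix α ∈ unitaryGroup (I → Fin 2) ℂ :=
  qubitPermMatrix_eq_permMatrix α ▸ permMatrix_mem_unitaryGroup _

theorem qubitPermMatrix_mulVec_one (α : Equiv.Perm I) : qubitPermMatrix α *ᵥ 1 = 1 := by
  rw [qubitPermMatrix_eq_permMatrix, permMatrix_mulVec]
  rfl

theorem qubitPermMatrix_conj_eq_self_iff (α : Equiv.Perm I)
    (A : Matrix (I → Fin 2) (I → Fin 2) ℂ) :
    qubitPermMatrix α * A * (qubitPermMatrix α)⁻¹ = A ↔ Commute A (qubitPermMatrix α) :=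
  conj_eq_self_iff_commute (Unitary.toUnits ⟨_, qubitPermMatrix_mem_unitaryGroup α⟩).isUnit

end PermutationMatrix

theorem exp_surjective_Gsu_GSU_general {I : Type*} [DecidableEq I] [Fintype I]
    (S : Set (Equiv.Perm I)) (A : Matrix (I → Fin 2) (I → Fin 2) ℂ)
    (hA : A * Aᴴ = 1 ∧ A.det = 1 ∧
      ∀ α ∈ S, qubitPermMatrix α * A * (qubitPermMatrix α)⁻¹ = A) :
    ∃ a : Matrix (I → Fin 2) (I → Fin 2) ℂ,
      aᴴ = -a ∧ a.trace = 0 ∧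
      (∀ α ∈ S, qubitPermMatrix α * a * (qubitPermMatrix α)⁻¹ = a) ∧
      A = exp a := by
  obtain ⟨hunitary, hdet, hinv⟩ := hA
  obtain ⟨a, hskew, htrace, hcomm, hexp⟩ := exists_mem_skewAdjoint_commute_exp_eq
    (U := fun α : S ↦ qubitPermMatrix (α : Equiv.Perm I)) (μ := 1) (v := 1)
    (fun α ↦ isStarNormal_of_mem_unitary (qubitPermMatrix_mem_unitaryGroup α.1)) one_ne_zero
    (fun α ↦ by rw [qubitPermMatrix_mulVec_one, Pi.one_apply, one_smul])
    (mem_specialUnitaryGroup_iff.2 ⟨mem_unitaryGroup_iff.2 hunitary, hdet⟩)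
    (fun α ↦ (qubitPermMatrix_conj_eq_self_iff α.1 A).1 (hinv α α.2))
  exact ⟨a, skewAdjoint.mem_iff.1 hskew, htrace,
    fun α hα ↦ (qubitPermMatrix_conj_eq_self_iff α a).2 (hcomm ⟨α, hα⟩), hexp.symm⟩

/-- For `N ≥ 1` and a subgroup `G` of the permutation group of `Fin N`, every
`A ∈ SU(2^N)` satisfying `U_α A U_α⁻¹ = A` for all `α ∈ G` is the exponential of a traceless
skew-Hermitian matrix `a` satisfying `U_α a U_α⁻¹ = a` for all `α ∈ G`. -/
theorem exp_surjective_Gsu_GSU (N : ℕ) (hN : 1 ≤ N) (G : Subgroup (Equiv.Perm (Fin N)))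
    (A : Matrix (Fin N → Fin 2) (Fin N → Fin 2) ℂ)
    (hA : A * Aᴴ = 1 ∧ A.det = 1 ∧
      ∀ α ∈ G, qubitPermMatrix α * A * (qubitPermMatrix α)⁻¹ = A) :
    ∃ a : Matrix (Fin N → Fin 2) (Fin N → Fin 2) ℂ,
      aᴴ = -a ∧ a.trace = 0 ∧
      (∀ α ∈ G, qubitPermMatrix α * a * (qubitPermMatrix α)⁻¹ = a) ∧
      A = NormedSpace.exp a :=
  exp_surjective_Gsu_GSU_general G A hA
end

section
/- Let k ≥ 1, let λ : Fin k → ℕ with each λ i ≥ 1 and N = Σ_i λ i, and identify Fin N with the sigma type Σ i, Fin (λ i) (the qubits partitioned into blocks of sizes λ i). For each i let G_i be a subgroup of the permutation group of Fin (λ i), and let G be the subgroup of the permutation group of Σ i, Fin (λ i) consisting of the permutations (i, j) ↦ (i, α_i(j)) for families (α_i) with α_i ∈ G_i. Then the real dimension of Gsu(2^N) satisfies dim_ℝ Gsu(2^N) = ∏_{i} (dim_ℝ G_i su(2^{λ i}) + 1) − 1. -/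
open Matrix

/-!
A complex number `z` can be recovered from `re z + im z` and `im z - re z`, and these are the
values of `re + im` at the entries `z` and `-conj z` that a skew-Hermitian matrix has at `(x, y)`
and `(y, x)`. So `re + im`, taken entrywise, identifies the skew-Hermitian matrices over `X`
invariant under a group acting on `X` with the real functions on the orbits in `X × X`. Their
traces are imaginary and not all zero, whence `dim + 1` orbits when `dim` is the dimension of the
traceless ones. Finally, for a group acting blockwise on the qubits, an orbit of pairs of colorings
is a family of orbits of pairs of colorings of the blocks, so the orbit counts multiply.
-/

section GroupAction

variable (H X : Type*) [Group H] [MulAction H X]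

/-- The real space of skew-Hermitian matrices over `X` invariant under simultaneous translation of
rows and columns by `H`. -/
def invariantSkewHermitian : Submodule ℝ (Matrix X X ℂ) where
  carrier := {a | aᴴ = -a ∧ ∀ (h : H) (x y : X), a (h • x) (h • y) = a x y}
  zero_mem' := by simp
  add_mem' := fun {a b} ⟨skew_a, inv_a⟩ ⟨skew_b, inv_b⟩ =>
    ⟨by rw [conjTranspose_add, skew_a, skew_b, neg_add],
      fun h x y => by simp only [Matrix.add_apply, inv_a, inv_b]⟩
  smul_mem' := fun c a ⟨skew_a, inv_a⟩ =>
    ⟨by rw [conjTranspose_smul, skew_a, star_trivial, smul_neg],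
      fun h x y => by simp only [Matrix.smul_apply, inv_a]⟩

/-- The space `Gsu` of an action of `H` on `X`: the traceless matrices in
`invariantSkewHermitian H X`. For `Gsu(2^n)` take the action of `Gᵈᵐᵃ` on `I → Fin 2`, in which
`DomMulAct.mk α` sends `x` to `x ∘ α`. -/
noncomputable def invariantSu [Fintype X] : Submodule ℝ (Matrix X X ℂ) :=
  invariantSkewHermitian H X ⊓ LinearMap.ker (traceLinearMap X ℝ ℂ)

variable {H X}

theorem mem_invariantSkewHermitian_iff {a : Matrix X X ℂ} :
    a ∈ invariantSkewHermitian H X ↔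
      aᴴ = -a ∧ ∀ (h : H) (x y : X), a (h • x) (h • y) = a x y :=
  Iff.rfl

theorem mem_invariantSu_iff [Fintype X] {a : Matrix X X ℂ} :
    a ∈ invariantSu H X ↔
      aᴴ = -a ∧ a.trace = 0 ∧ ∀ (h : H) (x y : X), a (h • x) (h • y) = a x y := by
  rw [invariantSu, Submodule.mem_inf, mem_invariantSkewHermitian_iff, LinearMap.mem_ker,
    traceLinearMap_apply, and_assoc, and_comm (b := a.trace = 0)]

/-- The skew-Hermitian matrix whose entries have `re + im` equal to the given function on the
orbits of pairs. -/
noncomputable def skewHermitianOfOrbitFun (f : MulAction.orbitRel.Quotient H (X × X) → ℝ) :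
    Matrix X X ℂ :=
  Matrix.of fun x y => ⟨(f ⟦(x, y)⟧ - f ⟦(y, x)⟧) / 2, (f ⟦(x, y)⟧ + f ⟦(y, x)⟧) / 2⟩

theorem skewHermitianOfOrbitFun_mem (f : MulAction.orbitRel.Quotient H (X × X) → ℝ) :
    skewHermitianOfOrbitFun f ∈ invariantSkewHermitian H X := by
  refine ⟨?_, fun h x y => ?_⟩
  · ext x y
    apply Complex.ext <;>
      simp only [skewHermitianOfOrbitFun, conjTranspose_apply, Matrix.neg_apply, of_apply,
        Complex.star_def, Complex.conj_re, Complex.conj_im, Complex.neg_re, Complex.neg_im] <;>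
      ring
  · have orbit_eq (p : X × X) : (⟦h • p⟧ : MulAction.orbitRel.Quotient H (X × X)) = ⟦p⟧ :=
      Quotient.sound (MulAction.mem_orbit p h)
    have hxy := orbit_eq (x, y)
    have hyx := orbit_eq (y, x)
    simp only [Prod.smul_mk] at hxy hyx
    simp only [skewHermitianOfOrbitFun, of_apply, hxy, hyx]

variable (H X) in
/-- An invariant skew-Hermitian matrix, encoded as the function `re + im` of its entries. -/
noncomputable def invariantSkewHermitianEquiv :
    invariantSkewHermitian H X ≃ₗ[ℝ] (MulAction.orbitRel.Quotient H (X × X) → ℝ) where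
  toFun a := Quotient.lift (fun p => (a.1 p.1 p.2).re + (a.1 p.1 p.2).im) <| by
    rintro _ p ⟨h, rfl⟩
    simp only [Prod.smul_fst, Prod.smul_snd, a.2.2 h]
  map_add' a b := by
    ext ⟨x, y⟩
    exact add_add_add_comm _ _ _ _
  map_smul' c a := by
    ext ⟨x, y⟩
    change (c • a.1 x y).re + (c • a.1 x y).im = c * ((a.1 x y).re + (a.1 x y).im)
    rw [Complex.smul_re, Complex.smul_im, smul_eq_mul, smul_eq_mul, mul_add]
  invFun f := ⟨skewHermitianOfOrbitFun f, skewHermitianOfOrbitFun_mem f⟩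
  left_inv a := by
    ext x y
    have skew : a.1 y x = -star (a.1 x y) := by
      rw [← neg_eq_iff_eq_neg, ← conjTranspose_apply, a.2.1]; rfl
    apply Complex.ext <;>
      simp only [skewHermitianOfOrbitFun, of_apply, Quotient.lift_mk, skew, Complex.star_def,
        Complex.neg_re, Complex.neg_im, Complex.conj_re, Complex.conj_im] <;>
      ring
  right_inv f := by
    ext ⟨x, y⟩
    change (f ⟦(x, y)⟧ - f ⟦(y, x)⟧) / 2 + (f ⟦(x, y)⟧ + f ⟦(y, x)⟧) / 2 = f ⟦(x, y)⟧
    ring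

theorem finrank_invariantSkewHermitian [Finite X] :
    Module.finrank ℝ (invariantSkewHermitian H X) =
      Nat.card (MulAction.orbitRel.Quotient H (X × X)) := by
  have := Fintype.ofFinite (MulAction.orbitRel.Quotient H (X × X))
  rw [(invariantSkewHermitianEquiv H X).finrank_eq, Module.finrank_fintype_fun_eq_card,
    Nat.card_eq_fintype_card]

theorem re_trace_eq_zero_of_conjTranspose_eq_neg [Fintype X] {a : Matrix X X ℂ} (ha : aᴴ = -a) :
    a.trace.re = 0 := by
  have h := congrArg Complex.re (trace_conjTranspose a)
  rw [ha, trace_neg, Complex.neg_re, Complex.star_def, Complex.conj_re] at h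
  linarith

variable (H X) in
/-- The imaginary part of the trace on invariant skew-Hermitian matrices; nothing is lost, as their
trace is imaginary. -/
noncomputable def imTrace [Fintype X] : Module.Dual ℝ (invariantSkewHermitian H X) :=
  Complex.imLm ∘ₗ traceLinearMap X ℝ ℂ ∘ₗ (invariantSkewHermitian H X).subtype

theorem imTrace_eq_zero_iff [Fintype X] {a : invariantSkewHermitian H X} :
    imTrace H X a = 0 ↔ a.1.trace = 0 := by
  simp [imTrace, Complex.ext_iff, re_trace_eq_zero_of_conjTranspose_eq_neg a.2.1]

theorem imTrace_ne_zero [Fintype X] [Nonempty X] : imTrace H X ≠ 0 := by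
  classical
  have mem : Complex.I • (1 : Matrix X X ℂ) ∈ invariantSkewHermitian H X :=
    ⟨by simp, fun h x y => by simp [one_apply]⟩
  intro h
  have trace_eq_zero := imTrace_eq_zero_iff.1 (LinearMap.congr_fun h ⟨_, mem⟩)
  simp at trace_eq_zero

theorem invariantSu_eq_map_ker_imTrace [Fintype X] :
    invariantSu H X =
      (LinearMap.ker (imTrace H X)).map (invariantSkewHermitian H X).subtype := by
  ext a
  simp [invariantSu, imTrace_eq_zero_iff, and_comm]

variable (H X) in
theorem finrank_invariantSu_add_one [Fintype X] [Nonempty X] :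
    Module.finrank ℝ (invariantSu H X) + 1 =
      Nat.card (MulAction.orbitRel.Quotient H (X × X)) := by
  rw [invariantSu_eq_map_ker_imTrace, Submodule.finrank_map_subtype_eq,
    Module.Dual.finrank_ker_add_one_of_ne_zero imTrace_ne_zero, finrank_invariantSkewHermitian]

end GroupAction

section SigmaColorings

variable {ι : Type*} {I : ι → Type*} {A : Type*}

/-- A pair of colorings of a disjoint union, restricted to each block. -/
def sigmaColoringPairEquiv :
    ((Σ i, I i) → A) × ((Σ i, I i) → A) ≃ ∀ i, (I i → A) × (I i → A) :=
  ((Equiv.piCurry fun _ _ => A).prodCongr (Equiv.piCurry fun _ _ => A)).trans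
    (Equiv.arrowProdEquivProdArrow ι (fun i => I i → A) fun i => I i → A).symm

/-- The product of subgroups `G' i`, acting blockwise on the disjoint union of the `I i`. -/
def sigmaPermSubgroup (G' : ∀ i, Subgroup (Equiv.Perm (I i))) :
    Subgroup (Equiv.Perm (Σ i, I i)) :=
  (Subgroup.pi Set.univ G').map (Equiv.Perm.sigmaCongrRightHom I)

variable (G' : ∀ i, Subgroup (Equiv.Perm (I i)))

theorem mem_sigmaPermSubgroup_iff {π : Equiv.Perm (Σ i, I i)} :
    π ∈ sigmaPermSubgroup G' ↔ ∃ α : ∀ i, Equiv.Perm (I i),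
      (∀ i, α i ∈ G' i) ∧ ∀ p : Σ i, I i, π p = ⟨p.1, α p.1 p.2⟩ := by
  simp only [sigmaPermSubgroup, Subgroup.mem_map, Subgroup.mem_pi, Set.mem_univ, true_imp_iff,
    Equiv.ext_iff, eq_comm (a := π _)]
  rfl

theorem orbitRel_sigmaColoringPair_iff (p q : ((Σ i, I i) → A) × ((Σ i, I i) → A)) :
    MulAction.orbitRel (sigmaPermSubgroup G')ᵈᵐᵃ _ p q ↔ ∀ i, MulAction.orbitRel (G' i)ᵈᵐᵃ _
      (sigmaColoringPairEquiv p i) (sigmaColoringPairEquiv q i) := by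
  constructor
  · rintro ⟨g, rfl⟩ i
    obtain ⟨α, hα, hπ⟩ := (mem_sigmaPermSubgroup_iff G').1 (DomMulAct.mk.symm g).2
    refine ⟨DomMulAct.mk ⟨α i, hα i⟩, Prod.ext ?_ ?_⟩ <;> funext j
    · exact congrArg q.1 (hπ ⟨i, j⟩).symm
    · exact congrArg q.2 (hπ ⟨i, j⟩).symm
  · intro h
    choose g hg using h
    let α i : G' i := DomMulAct.mk.symm (g i)
    have hα : Equiv.sigmaCongrRight (fun i => (α i : Equiv.Perm (I i))) ∈ sigmaPermSubgroup G' :=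
      (mem_sigmaPermSubgroup_iff G').2 ⟨fun i => α i, fun i => (α i).2, fun _ => rfl⟩
    refine ⟨DomMulAct.mk ⟨_, hα⟩, Prod.ext ?_ ?_⟩ <;> funext ⟨i, j⟩
    · exact congrFun (congrArg Prod.fst (hg i)) j
    · exact congrFun (congrArg Prod.snd (hg i)) j

theorem card_orbits_sigmaColoringPair [Fintype ι] :
    Nat.card (MulAction.orbitRel.Quotient (sigmaPermSubgroup G')ᵈᵐᵃ
        (((Σ i, I i) → A) × ((Σ i, I i) → A))) =
      ∏ i, Nat.card (MulAction.orbitRel.Quotient (G' i)ᵈᵐᵃ ((I i → A) × (I i → A))) := by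
  rw [← Nat.card_pi]
  exact Nat.card_congr <|
    (Quotient.congr sigmaColoringPairEquiv (orbitRel_sigmaColoringPair_iff G')).trans
      (Setoid.piQuotientEquiv fun i => MulAction.orbitRel (G' i)ᵈᵐᵃ ((I i → A) × (I i → A))).symm

end SigmaColorings

section PermMatrix

theorem permMatrix_mul_mul_inv {n R : Type*} [Fintype n] [DecidableEq n] [CommRing R]
    (σ : Equiv.Perm n) (a : Matrix n n R) :
    σ.permMatrix R * a * (σ.permMatrix R)⁻¹ = a.submatrix σ σ := by
  have inv_eq : (σ.permMatrix R)⁻¹ = (σ⁻¹).permMatrix R :=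
    inv_eq_right_inv (by rw [← permMatrix_mul, inv_mul_cancel, permMatrix_one])
  rw [inv_eq, Equiv.Perm.permMatrix, Equiv.Perm.permMatrix, PEquiv.toMatrix_toPEquiv_mul,
    PEquiv.mul_toMatrix_toPEquiv]
  rfl

variable {I : Type*} [Fintype I] [DecidableEq I]

theorem qubitPermMatrix_eq_permMatrix_s13 (α : Equiv.Perm I) :
    qubitPermMatrix α =
      (MulAction.toPerm (DomMulAct.mk α) : Equiv.Perm (I → Fin 2)).permMatrix ℂ := by
  ext x y
  rw [Equiv.Perm.permMatrix, PEquiv.toMatrix_toPEquiv_apply, Pi.single_apply]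
  rfl

theorem qubitPermMatrix_conj_eq_iff (α : Equiv.Perm I) (a : Matrix (I → Fin 2) (I → Fin 2) ℂ) :
    qubitPermMatrix α * a * (qubitPermMatrix α)⁻¹ = a ↔ ∀ x y, a (x ∘ α) (y ∘ α) = a x y := by
  rw [qubitPermMatrix_eq_permMatrix_s13, permMatrix_mul_mul_inv, ← Matrix.ext_iff]
  rfl

theorem eq_invariantSu_of_mem_iff {G : Subgroup (Equiv.Perm I)}
    {V : Submodule ℝ (Matrix (I → Fin 2) (I → Fin 2) ℂ)}
    (hV : ∀ a, a ∈ V ↔ aᴴ = -a ∧ a.trace = 0 ∧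
      ∀ α ∈ G, qubitPermMatrix α * a * (qubitPermMatrix α)⁻¹ = a) :
    V = invariantSu Gᵈᵐᵃ (I → Fin 2) := by
  ext a
  simp only [hV, mem_invariantSu_iff, qubitPermMatrix_conj_eq_iff]
  exact and_congr_right' <| and_congr_right'
    ⟨fun h g => h _ (DomMulAct.mk.symm g).2, fun h α hα => h (DomMulAct.mk ⟨α, hα⟩)⟩

end PermMatrix

theorem finrank_product_Gsu_general {ι A : Type*} [Fintype ι] [DecidableEq ι] {I : ι → Type*}
    [∀ i, Fintype (I i)] [∀ i, DecidableEq (I i)] [Fintype A] [Nonempty A]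
    (G' : ∀ i, Subgroup (Equiv.Perm (I i))) :
    Module.finrank ℝ (invariantSu (sigmaPermSubgroup G')ᵈᵐᵃ ((Σ i, I i) → A)) + 1 =
      ∏ i, (Module.finrank ℝ (invariantSu (G' i)ᵈᵐᵃ (I i → A)) + 1) := by
  simp only [finrank_invariantSu_add_one, card_orbits_sigmaColoringPair]

/-- Let `k ≥ 1`, `λ : Fin k → ℕ` with each `λ i ≥ 1` and `N = Σ i, λ i`, and
identify the `N` qubits with the sigma type `Σ i, Fin (λ i)`.  For subgroups `G_i` of the
permutation groups of the blocks, let `G` be the subgroup of permutations of `Σ i, Fin (λ i)`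
of the form `(i, j) ↦ (i, α_i j)` with `α_i ∈ G_i`.  Then
`dim_ℝ Gsu(2^N) = ∏ i, (dim_ℝ G_i su(2^{λ i}) + 1) − 1`. -/
theorem finrank_product_Gsu (k : ℕ) (hk : 1 ≤ k) (lam : Fin k → ℕ)
    (hlam : ∀ i, 1 ≤ lam i) (N : ℕ) (hN : N = ∑ i, lam i)
    (G' : ∀ i, Subgroup (Equiv.Perm (Fin (lam i))))
    (G : Subgroup (Equiv.Perm (Σ i, Fin (lam i))))
    (hG : ∀ π : Equiv.Perm (Σ i, Fin (lam i)),
      π ∈ G ↔ ∃ α : ∀ i, Equiv.Perm (Fin (lam i)),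
        (∀ i, α i ∈ G' i) ∧ ∀ p : Σ i, Fin (lam i), π p = ⟨p.1, α p.1 p.2⟩)
    (Vblock : ∀ i, Submodule ℝ (Matrix (Fin (lam i) → Fin 2) (Fin (lam i) → Fin 2) ℂ))
    (hVblock : ∀ i a, a ∈ Vblock i ↔ aᴴ = -a ∧ a.trace = 0 ∧
      ∀ α ∈ G' i, qubitPermMatrix α * a * (qubitPermMatrix α)⁻¹ = a)
    (W : Submodule ℝ
      (Matrix ((Σ i, Fin (lam i)) → Fin 2) ((Σ i, Fin (lam i)) → Fin 2) ℂ))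
    (hW : ∀ a, a ∈ W ↔ aᴴ = -a ∧ a.trace = 0 ∧
      ∀ π ∈ G, qubitPermMatrix π * a * (qubitPermMatrix π)⁻¹ = a) :
    Module.finrank ℝ W = (∏ i, (Module.finrank ℝ (Vblock i) + 1)) - 1 := by
  obtain rfl : G = sigmaPermSubgroup G' :=
    Subgroup.ext fun π => (hG π).trans (mem_sigmaPermSubgroup_iff G').symm
  rw [eq_invariantSu_of_mem_iff hW, funext fun i => eq_invariantSu_of_mem_iff (hVblock i)]
  exact Nat.eq_sub_of_add_eq (finrank_product_Gsu_general G')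
end
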